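/- arXiv:1101.1724 — 6 statements merged into one kernel-verified Lean document; each statement's English description precedes it below -/
import Mathlib

section
/- (Csaki–Vincze theorem.) For every n ∈ ℕ, |Ȳ_n − |S_n|| ≤ 2. (In particular, if S is a simple random walk then S̄ = T(S) is again a simple random walk whose reflected-at-maximum process Ȳ stays within distance 2 of |S|.) -/
noncomputable section

/-- The walk `S` associated with the sign sequence `X : {1,2,…} → {−1,1}`:
`S 0 = 0`, `S n = X 1 + ⋯ + X n`. -/
def cvWalk (X : ℕ → ℤ) (n : ℕ) : ℤ := ∑ j ∈ Finset.Icc 1 n, X j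

/-- The crossing times of `S`: `τ 0 = 0` and
`τ (l+1) = min {i > τ l : S (i-1) * S (i+1) < 0}`. -/
def cvTau (X : ℕ → ℤ) : ℕ → ℕ
  | 0 => 0
  | l + 1 => sInf {i : ℕ | cvTau X l < i ∧ cvWalk X (i - 1) * cvWalk X (i + 1) < 0}

/-- The increments of the Csaki–Vincze transform `S̄ = T(S)`:
`X̄ j = Σ_{l ≥ 0} (−1)^(l+1) · X 1 · X (j+1) · 1_{τ l + 1 ≤ j ≤ τ (l+1)}`
(the sum may be truncated to `l ≤ j` since `l ≤ τ l` whenever `τ l + 1 ≤ j`). -/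
def cvXbar (X : ℕ → ℤ) (j : ℕ) : ℤ :=
  ∑ l ∈ Finset.range (j + 1),
    (-1 : ℤ) ^ (l + 1) * X 1 * X (j + 1) *
      (if cvTau X l + 1 ≤ j ∧ j ≤ cvTau X (l + 1) then 1 else 0)

/-- The Csaki–Vincze transform `S̄ = T(S)`. -/
def cvSbar (X : ℕ → ℤ) (n : ℕ) : ℤ := ∑ j ∈ Finset.Icc 1 n, cvXbar X j

/-- `Ȳ`-type process of a walk `f`: `max_{0 ≤ k ≤ n} f k − f n`. -/
def cvYof (f : ℕ → ℤ) (n : ℕ) : ℤ :=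
  (Finset.range (n + 1)).sup' Finset.nonempty_range_add_one f - f n

/-- `Ȳ n = max_{0 ≤ k ≤ n} S̄ k − S̄ n`. -/
def cvYbar (X : ℕ → ℤ) (n : ℕ) : ℤ := cvYof (cvSbar X) n

theorem cv_tau_spec (X : ℕ → ℤ)
    (hinf : {i : ℕ | 1 ≤ i ∧ cvWalk X (i - 1) * cvWalk X (i + 1) < 0}.Infinite) (l : ℕ) :
    cvTau X l < cvTau X (l + 1) ∧
      cvWalk X (cvTau X (l + 1) - 1) * cvWalk X (cvTau X (l + 1) + 1) < 0 := by
  obtain ⟨b, hb, hlt⟩ := hinf.exists_gt (cvTau X l)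
  have hne : {i : ℕ | cvTau X l < i ∧ cvWalk X (i - 1) * cvWalk X (i + 1) < 0}.Nonempty :=
    ⟨b, hlt, hb.2⟩
  exact Nat.sInf_mem hne

theorem cv_xbar (X : ℕ → ℤ)
    (hinf : {i : ℕ | 1 ≤ i ∧ cvWalk X (i - 1) * cvWalk X (i + 1) < 0}.Infinite) (l j : ℕ)
    (h1 : cvTau X l + 1 ≤ j) (h2 : j ≤ cvTau X (l + 1)) :
    cvXbar X j = (-1 : ℤ) ^ (l + 1) * X 1 * X (j + 1) := by
  have hm : StrictMono (cvTau X) := strictMono_nat_of_lt_succ fun l => (cv_tau_spec X hinf l).1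
  have hl : l ≤ cvTau X l := hm.le_apply
  unfold cvXbar
  rw [Finset.sum_eq_single l]
  · rw [if_pos ⟨h1, h2⟩, mul_one]
  · intro k _ hk
    rw [if_neg, mul_zero]
    rintro ⟨a, b⟩
    rcases lt_or_gt_of_ne hk with h | h
    · have := hm.monotone (show k + 1 ≤ l from h)
      omega
    · have := hm.monotone (show l + 1 ≤ k from h)
      omega
  · intro h
    exact absurd (Finset.mem_range.2 (by omega)) h

theorem cv_walk_succ (X : ℕ → ℤ) (n : ℕ) : cvWalk X (n + 1) = cvWalk X n + X (n + 1) := by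
  unfold cvWalk
  rw [Finset.sum_Icc_succ_top (by omega)]

theorem cv_sbar_succ (X : ℕ → ℤ) (n : ℕ) :
    cvSbar X (n + 1) = cvSbar X n + cvXbar X (n + 1) := by
  unfold cvSbar
  rw [Finset.sum_Icc_succ_top (by omega)]

theorem cv_inv (X : ℕ → ℤ) (hX : ∀ j, 1 ≤ j → X j = 1 ∨ X j = -1)
    (hinf : {i : ℕ | 1 ≤ i ∧ cvWalk X (i - 1) * cvWalk X (i + 1) < 0}.Infinite) (n : ℕ) :
    ∃ (l : ℕ) (s : ℤ), s = (-1) ^ l * X 1 ∧ (s = 1 ∨ s = -1) ∧ cvTau X l ≤ n ∧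
      n < cvTau X (l + 1) ∧ 0 ≤ s * cvWalk X n ∧ 0 ≤ s * cvWalk X (n + 1) ∧
      cvSbar X n = 2 * l + 1 - s * cvWalk X (n + 1) ∧
      (∃ k ≤ n, 2 * (l : ℤ) ≤ cvSbar X k) ∧ ∀ k ≤ n, cvSbar X k ≤ 2 * l + 1 := by
  induction n with
  | zero =>
    have h := (cv_tau_spec X hinf 0).1
    have h0 : cvTau X 0 = 0 := rfl
    have hw : cvWalk X 0 = 0 := by simp [cvWalk]
    have hw1 : cvWalk X 1 = X 1 := by simp [cvWalk]
    have hs : cvSbar X 0 = 0 := by simp [cvSbar]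
    have h1 := hX 1 le_rfl
    refine ⟨0, X 1, by simp, h1, h0.le, by omega, by simp [hw], ?_, ?_, ⟨0, le_rfl, by simp [hs]⟩, ?_⟩
    · rw [zero_add, hw1]; exact mul_self_nonneg _
    · rw [zero_add, hw1, hs]; rcases h1 with h1 | h1 <;> simp [h1]
    · intro k hk
      obtain rfl : k = 0 := by omega
      simp [hs]
  | succ n ih =>
    obtain ⟨l, s, hs, hs1, ht1, ht2, hp, hp1, hS, ⟨k, hk, hkS⟩, hM⟩ := ih
    have hx := cv_xbar X hinf l (n + 1) (by omega) (by omega)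
    have hx' : cvXbar X (n + 1) = - s * X (n + 1 + 1) := by rw [hx, hs]; ring
    have hb := cv_sbar_succ X n
    have hw := cv_walk_succ X n
    have hw1 := cv_walk_succ X (n + 1)
    have hX1 := hX (n + 1) (by omega)
    have hX2 := hX (n + 1 + 1) (by omega)
    have hb' : cvSbar X (n + 1) = 2 * l + 1 - s * cvWalk X (n + 1 + 1) := by
      rw [hb, hx', hS, hw1]; ring
    rcases (show n + 1 ≤ cvTau X (l + 1) from ht2).eq_or_lt with he | hlt
    · have hc := (cv_tau_spec X hinf l).2
      rw [← he, Nat.add_sub_cancel] at hc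
      have hn := (cv_tau_spec X hinf (l + 1)).1
      have key : cvWalk X (n + 1) = 0 ∧ s * cvWalk X (n + 1 + 1) = -1 := by
        rcases mul_neg_iff.1 hc with ⟨a, b⟩ | ⟨a, b⟩ <;>
          rcases hs1 with rfl | rfl <;> omega
      refine ⟨l + 1, -s, by rw [hs]; ring, by omega, by omega, by omega, ?_, ?_, ?_,
        ⟨n + 1, le_rfl, ?_⟩, ?_⟩
      · simp [key.1]
      · rw [neg_mul, key.2]; norm_num
      · rw [hb', neg_mul, key.2]; push_cast; ring
      · rw [hb', key.2]; push_cast; linarith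
      · intro k hk
        rcases Nat.le_succ_iff.1 hk with h | h
        · have := hM k h
          push_cast; linarith
        · rw [h, Nat.succ_eq_add_one, hb', key.2]; push_cast; linarith
    · have hc : ¬ cvWalk X n * cvWalk X (n + 1 + 1) < 0 := by
        intro hc
        have : cvTau X (l + 1) ≤ n + 1 :=
          Nat.sInf_le (s := {i : ℕ | cvTau X l < i ∧ cvWalk X (i - 1) * cvWalk X (i + 1) < 0})
            ⟨by omega, hc⟩
        omega
      have key : 0 ≤ s * cvWalk X (n + 1 + 1) := by
        by_contra hneg
        apply hc
        rw [mul_neg_iff]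
        rcases hs1 with rfl | rfl <;> omega
      refine ⟨l, s, hs, hs1, by omega, hlt, hp1, key, hb', ⟨k, by omega, hkS⟩, ?_⟩
      intro k hk
      rcases Nat.le_succ_iff.1 hk with h | h
      · exact hM k h
      · rw [h, Nat.succ_eq_add_one, hb']; linarith

/-- **Csaki–Vincze theorem.** If `S` is the walk of a sign sequence `X` with infinitely
many crossings, and `S̄ = T(S)` is its Csaki–Vincze transform with
`Ȳ n = max_{k ≤ n} S̄ k − S̄ n`, then `|Ȳ n − |S n|| ≤ 2` for every `n`. -/
theorem csaki_vincze (X : ℕ → ℤ) (hX : ∀ j, 1 ≤ j → X j = 1 ∨ X j = -1)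
    (hinf : {i : ℕ | 1 ≤ i ∧ cvWalk X (i - 1) * cvWalk X (i + 1) < 0}.Infinite)
    (n : ℕ) :
    abs (cvYbar X n - abs (cvWalk X n)) ≤ 2 := by
  obtain ⟨l, s, -, hs1, -, -, -, hp1, hS, ⟨k, hk, hkS⟩, hM⟩ := cv_inv X hX hinf n
  have hw := cv_walk_succ X n
  have hX1 := hX (n + 1) (by omega)
  unfold cvYbar cvYof
  have hu : (Finset.range (n + 1)).sup' Finset.nonempty_range_add_one (cvSbar X) ≤ 2 * l + 1 :=
    Finset.sup'_le _ _ fun k hk => hM k (by have := Finset.mem_range.1 hk; omega)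
  have hl : 2 * (l : ℤ) ≤ (Finset.range (n + 1)).sup' Finset.nonempty_range_add_one (cvSbar X) :=
    hkS.trans (Finset.le_sup' _ (Finset.mem_range.2 (by omega)))
  generalize (Finset.range (n + 1)).sup' Finset.nonempty_range_add_one (cvSbar X) = M at *
  rw [abs_le]
  rcases abs_cases (cvWalk X n) with ⟨a, b⟩ | ⟨a, b⟩ <;> rcases hs1 with rfl | rfl <;> omega
end
end

section
/- (S̄ depends only on the products X_1·X_{j+1}.) Let X' : {1,2,3,…} → {−1,1} be another sign sequence with walk S', and suppose X_1·X_{j+1} = X'_1·X'_{j+1} for all j ≥ 1. Then the set {i ≥ 1 : S'_{i−1}·S'_{i+1} < 0} is also infinite, the crossing times of S' coincide with those of S, and T(S') = T(S). In particular, taking X' = −X, the transform T is even: T(−S) = T(S). -/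
noncomputable section

theorem cv_aux (X X' : ℕ → ℤ) (c : ℤ) (hc : c * c = 1) (h : ∀ j, 1 ≤ j → X' j = c * X j) :
    (∀ i k, cvWalk X' i * cvWalk X' k = cvWalk X i * cvWalk X k) ∧
    (∀ l, cvTau X' l = cvTau X l) ∧ (∀ n, cvSbar X' n = cvSbar X n) := by
  have hw : ∀ n, cvWalk X' n = c * cvWalk X n := by
    intro n
    unfold cvWalk
    rw [Finset.mul_sum]
    exact Finset.sum_congr rfl fun j hj => h j (Finset.mem_Icc.mp hj).1
  have hp : ∀ i k, cvWalk X' i * cvWalk X' k = cvWalk X i * cvWalk X k := by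
    intro i k
    rw [hw, hw]
    linear_combination (cvWalk X i * cvWalk X k) * hc
  have ht : ∀ l, cvTau X' l = cvTau X l := by
    intro l
    induction l with
    | zero => simp only [cvTau]
    | succ l ih => simp only [cvTau, ih, hp]
  refine ⟨hp, ht, fun n => ?_⟩
  unfold cvSbar
  refine Finset.sum_congr rfl fun j _ => ?_
  unfold cvXbar
  refine Finset.sum_congr rfl fun l _ => ?_
  rw [ht, ht, h 1 le_rfl, h (j + 1) (by omega)]
  congr 1
  linear_combination ((-1 : ℤ) ^ (l + 1) * X 1 * X (j + 1)) * hc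

/-- **`S̄` depends only on the products `X 1 · X (j+1)`.** If `X'` is another sign
sequence with `X 1 · X (j+1) = X' 1 · X' (j+1)` for all `j ≥ 1`, then the crossing set of
`S'` is also infinite, the crossing times of `S'` coincide with those of `S`, and
`T(S') = T(S)`.  In particular (taking `X' = −X`), the transform `T` is even:
`T(−S) = T(S)`. -/
theorem cv_depends_only_on_products (X : ℕ → ℤ) (hX : ∀ j, 1 ≤ j → X j = 1 ∨ X j = -1)
    (hinf : {i : ℕ | 1 ≤ i ∧ cvWalk X (i - 1) * cvWalk X (i + 1) < 0}.Infinite)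
    (X' : ℕ → ℤ) (hX' : ∀ j, 1 ≤ j → X' j = 1 ∨ X' j = -1)
    (hprod : ∀ j, 1 ≤ j → X 1 * X (j + 1) = X' 1 * X' (j + 1)) :
    ({i : ℕ | 1 ≤ i ∧ cvWalk X' (i - 1) * cvWalk X' (i + 1) < 0}.Infinite ∧
      (∀ l, cvTau X' l = cvTau X l) ∧ (∀ n, cvSbar X' n = cvSbar X n)) ∧
    (∀ n, cvSbar (fun j => -X j) n = cvSbar X n) := by
  have h1 : X 1 * X 1 = 1 := by rcases hX 1 le_rfl with h | h <;> simp [h]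
  have h1' : X' 1 * X' 1 = 1 := by rcases hX' 1 le_rfl with h | h <;> simp [h]
  obtain ⟨hp, ht, hs⟩ := cv_aux X X' (X 1 * X' 1)
    (by linear_combination (X' 1 * X' 1) * h1 + h1') (by
      intro j hj
      rcases Nat.lt_or_ge 1 j with h | h
      · have := hprod (j - 1) (by omega)
        rw [Nat.sub_add_cancel hj] at this
        linear_combination (-X' 1) * this - X' j * h1'
      · obtain rfl : j = 1 := by omega
        linear_combination (-X' 1) * h1)
  refine ⟨⟨?_, ht, hs⟩, (cv_aux X (fun j => -X j) (-1) (by norm_num) (by intros; ring)).2.2⟩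
  simpa only [hp] using hinf
end
end

section
/- On Ω = {−1,1}^{{1,2,3,…}} equipped with the product of uniform Bernoulli measures (so the coordinate functions (X_j)_{j≥1} are i.i.d. uniform on {−1,1}), the random variable X_1 is independent of the random sequence (X_1·X_{j+1})_{j≥1}. Consequently, S_1 = X_1 is independent of the Csaki–Vincze transform S̄ = T(S), since S̄ is a measurable function of (X_1·X_{j+1})_{j≥1}. -/
noncomputable section

open MeasureTheory ProbabilityTheory

open Classical in
/-- The Csaki–Vincze transform of the random path `j ↦ X j ω`, defined to be `≡ 0` on the
event where the crossing set is finite. -/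
def cvSbarRV {Ω : Type*} (X : ℕ → Ω → ℤ) (ω : Ω) (n : ℕ) : ℤ :=
  if {i : ℕ | 1 ≤ i ∧
      cvWalk (fun j => X j ω) (i - 1) * cvWalk (fun j => X j ω) (i + 1) < 0}.Infinite then
    cvSbar (fun j => X j ω) n
  else 0

lemma cvaux_walk_smul (c : ℤ) (X Z : ℕ → ℤ) (h : ∀ j, 1 ≤ j → Z j = c * X j) (n : ℕ) :
    cvWalk Z n = c * cvWalk X n := by
  unfold cvWalk
  rw [Finset.mul_sum]
  exact Finset.sum_congr rfl fun j hj => h j (Finset.mem_Icc.1 hj).1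

lemma cvaux_prod (c : ℤ) (hc : c * c = 1) (X Z : ℕ → ℤ) (h : ∀ j, 1 ≤ j → Z j = c * X j)
    (m n : ℕ) : cvWalk Z m * cvWalk Z n = cvWalk X m * cvWalk X n := by
  rw [cvaux_walk_smul c X Z h, cvaux_walk_smul c X Z h]
  linear_combination (cvWalk X m * cvWalk X n) * hc

lemma cvaux_tau (c : ℤ) (hc : c * c = 1) (X Z : ℕ → ℤ) (h : ∀ j, 1 ≤ j → Z j = c * X j)
    (l : ℕ) : cvTau Z l = cvTau X l := by
  induction l with
  | zero => simp [cvTau]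
  | succ l ih => simp only [cvTau, ih, cvaux_prod c hc X Z h]

lemma cvaux_xbar (c : ℤ) (hc : c * c = 1) (X Z : ℕ → ℤ) (h : ∀ j, 1 ≤ j → Z j = c * X j)
    (j : ℕ) : cvXbar Z j = cvXbar X j := by
  unfold cvXbar
  refine Finset.sum_congr rfl fun l _ => ?_
  rw [cvaux_tau c hc X Z h, cvaux_tau c hc X Z h, h 1 le_rfl, h (j + 1) (by omega)]
  congr 1
  linear_combination ((-1 : ℤ) ^ (l + 1) * X 1 * X (j + 1)) * hc

lemma cvaux_sbarRV {Ω Ω' : Type*} (c : ℤ) (hc : c * c = 1) (X : ℕ → Ω → ℤ) (Z : ℕ → Ω' → ℤ)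
    (ω : Ω) (ω' : Ω') (h : ∀ j, 1 ≤ j → Z j ω' = c * X j ω) :
    cvSbarRV Z ω' = cvSbarRV X ω := by
  funext n
  have h' := cvaux_prod c hc (fun j => X j ω) (fun j => Z j ω') h
  have h'' := cvaux_xbar c hc (fun j => X j ω) (fun j => Z j ω') h
  have hset : {i : ℕ | 1 ≤ i ∧
      cvWalk (fun j => Z j ω') (i - 1) * cvWalk (fun j => Z j ω') (i + 1) < 0} = {i : ℕ | 1 ≤ i ∧
      cvWalk (fun j => X j ω) (i - 1) * cvWalk (fun j => X j ω) (i + 1) < 0} := by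
    simp only [h']
  have hs : cvSbar (fun j => Z j ω') n = cvSbar (fun j => X j ω) n := by
    simp only [cvSbar, h'']
  unfold cvSbarRV
  rw [hset, hs]

section Meas
variable {Ω : Type*} [MeasurableSpace Ω] (X : ℕ → Ω → ℤ) (hX : ∀ j, Measurable (X j))
include hX

lemma cvaux_meas_walk (n : ℕ) : Measurable fun ω => cvWalk (fun j => X j ω) n := by
  unfold cvWalk
  exact Finset.measurable_fun_sum _ fun j _ => hX j

lemma cvaux_meas_cross (m n : ℕ) :
    MeasurableSet {ω | cvWalk (fun j => X j ω) m * cvWalk (fun j => X j ω) n < 0} :=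
  measurableSet_lt ((cvaux_meas_walk X hX m).mul (cvaux_meas_walk X hX n)) measurable_const

lemma cvaux_meas_tau (l : ℕ) : Measurable fun ω => cvTau (fun j => X j ω) l := by
  induction l with
  | zero => simp only [cvTau]; exact measurable_const
  | succ l ih =>
    have hS : ∀ i : ℕ, MeasurableSet {ω | cvTau (fun j => X j ω) l < i ∧
        cvWalk (fun j => X j ω) (i - 1) * cvWalk (fun j => X j ω) (i + 1) < 0} := fun i =>
      (measurableSet_lt ih measurable_const).inter (cvaux_meas_cross X hX _ _)
    simp only [cvTau]
    refine measurable_of_Iio fun k => ?_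
    have : ((fun ω => sInf {i : ℕ | cvTau (fun j => X j ω) l < i ∧
        cvWalk (fun j => X j ω) (i - 1) * cvWalk (fun j => X j ω) (i + 1) < 0}) ⁻¹' Set.Iio k)
        = (⋃ i ∈ Set.Iio k, {ω | cvTau (fun j => X j ω) l < i ∧
        cvWalk (fun j => X j ω) (i - 1) * cvWalk (fun j => X j ω) (i + 1) < 0}) ∪
        ({ω | 0 < k} ∩ ⋂ i, {ω | cvTau (fun j => X j ω) l < i ∧
        cvWalk (fun j => X j ω) (i - 1) * cvWalk (fun j => X j ω) (i + 1) < 0}ᶜ) := by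
      ext ω
      simp only [Set.mem_preimage, Set.mem_union, Set.mem_inter_iff, Set.mem_iUnion,
        Set.mem_iInter, Set.mem_compl_iff, Set.mem_ofPred_eq, Set.mem_Iio]
      generalize hP : (fun i : ℕ => cvTau (fun j => X j ω) l < i ∧
        cvWalk (fun j => X j ω) (i - 1) * cvWalk (fun j => X j ω) (i + 1) < 0) = P
      have hP' : ∀ i, (cvTau (fun j => X j ω) l < i ∧
        cvWalk (fun j => X j ω) (i - 1) * cvWalk (fun j => X j ω) (i + 1) < 0) ↔ P i := by
        intro i; rw [← hP]
      simp only [hP']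
      constructor
      · intro h
        by_cases hne : {i | P i}.Nonempty
        · exact Or.inl ⟨_, h, Nat.sInf_mem hne⟩
        · exact Or.inr ⟨by omega, fun i hi => hne ⟨i, hi⟩⟩
      · rintro (⟨i, hi, hp⟩ | ⟨h0, hn⟩)
        · exact lt_of_le_of_lt (Nat.sInf_le hp) hi
        · have : {i | P i} = ∅ := Set.eq_empty_of_forall_notMem hn
          rw [this]; simpa using h0
    rw [this]
    exact (MeasurableSet.biUnion (Set.to_countable _) fun i _ => hS i).union
      ((MeasurableSet.const _).inter (MeasurableSet.iInter fun i => (hS i).compl))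

lemma cvaux_meas_sbar (n : ℕ) : Measurable fun ω => cvSbar (fun j => X j ω) n := by
  unfold cvSbar cvXbar
  refine Finset.measurable_fun_sum _ fun j _ => Finset.measurable_fun_sum _ fun l _ => ?_
  refine (((measurable_const).mul (hX 1)).mul (hX (j + 1))).mul ?_
  refine Measurable.ite ?_ measurable_const measurable_const
  exact (measurableSet_le ((cvaux_meas_tau X hX l).add_const 1) measurable_const).inter
    (measurableSet_le measurable_const (cvaux_meas_tau X hX (l + 1)))

lemma cvaux_meas_sbarRV : Measurable fun ω => cvSbarRV X ω := by
  refine measurable_pi_iff.2 fun n => ?_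
  unfold cvSbarRV
  refine Measurable.ite ?_ (cvaux_meas_sbar X hX n) measurable_const
  have : {ω | {i : ℕ | 1 ≤ i ∧
      cvWalk (fun j => X j ω) (i - 1) * cvWalk (fun j => X j ω) (i + 1) < 0}.Infinite} =
      ⋂ N : ℕ, ⋃ i : ℕ, ({ω | N < i} ∩ ({ω | 1 ≤ i} ∩ {ω |
      cvWalk (fun j => X j ω) (i - 1) * cvWalk (fun j => X j ω) (i + 1) < 0})) := by
    ext ω
    simp only [Set.mem_ofPred_eq, Set.infinite_iff_exists_gt, Set.mem_iInter, Set.mem_iUnion,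
      Set.mem_inter_iff]
    refine forall_congr' fun N => exists_congr fun i => ?_
    tauto
  rw [this]
  exact MeasurableSet.iInter fun N => MeasurableSet.iUnion fun i =>
    (MeasurableSet.const _).inter ((MeasurableSet.const _).inter (cvaux_meas_cross X hX _ _))

end Meas

lemma cvaux_neg_map {Ω : Type*} [MeasurableSpace Ω] (μ : Measure Ω) [IsProbabilityMeasure μ]
    (U : Ω → ℤ) (hm : Measurable U) (hv : ∀ ω, U ω = 1 ∨ U ω = -1)
    (hl : μ {ω | U ω = 1} = 1 / 2 ∧ μ {ω | U ω = -1} = 1 / 2) :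
    μ.map (fun ω => - U ω) = μ.map U := by
  have hm' : Measurable fun ω => - U ω := hm.neg
  refine Measure.ext_of_singleton fun a => ?_
  rw [Measure.map_apply hm' (measurableSet_singleton a),
    Measure.map_apply hm (measurableSet_singleton a)]
  by_cases h1 : a = 1
  · subst h1
    have e1 : (fun ω => - U ω) ⁻¹' {1} = {ω | U ω = -1} := by
      ext ω; simp only [Set.mem_preimage, Set.mem_singleton_iff, Set.mem_ofPred_eq]; omega
    have e2 : U ⁻¹' {1} = {ω | U ω = 1} := rfl
    rw [e1, e2, hl.1, hl.2]
  by_cases h2 : a = -1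
  · subst h2
    have e1 : (fun ω => - U ω) ⁻¹' {-1} = {ω | U ω = 1} := by
      ext ω; simp only [Set.mem_preimage, Set.mem_singleton_iff, Set.mem_ofPred_eq]; omega
    have e2 : U ⁻¹' {-1} = {ω | U ω = -1} := rfl
    rw [e1, e2, hl.1, hl.2]
  have e1 : (fun ω => - U ω) ⁻¹' {a} = ∅ := by
    ext ω; have := hv ω
    simp only [Set.mem_preimage, Set.mem_singleton_iff, Set.mem_empty_iff_false, iff_false]; omega
  have e2 : U ⁻¹' {a} = ∅ := by
    ext ω; have := hv ω
    simp only [Set.mem_preimage, Set.mem_singleton_iff, Set.mem_empty_iff_false, iff_false]; omega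
  rw [e1, e2]

lemma cvaux_indep {Ω : Type*} [MeasurableSpace Ω] (μ : Measure Ω) [IsProbabilityMeasure μ]
    (U : Ω → ℤ) (Y : Ω → ℕ → ℤ) (hU : Measurable U) (hY : Measurable Y)
    (hv : ∀ ω, U ω = 1 ∨ U ω = -1) (hi : IndepFun U Y μ)
    (hs : μ.map (fun ω j => - Y ω j) = μ.map Y) :
    IndepFun U (fun ω j => U ω * Y ω j) μ := by
  have hYn : Measurable (fun ω j => - Y ω j) :=
    measurable_pi_iff.2 fun j => (measurable_pi_iff.1 hY j).neg
  have key : ∀ (A : Set ℤ) (B : Set (ℕ → ℤ)), MeasurableSet B →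
      μ (U ⁻¹' A ∩ (fun ω j => U ω * Y ω j) ⁻¹' B) = μ (U ⁻¹' A) * μ (Y ⁻¹' B) := by
    intro A B hB
    have hB' : MeasurableSet ((fun (y : ℕ → ℤ) j => - y j) ⁻¹' B) :=
      (measurable_pi_iff.2 fun j => (measurable_pi_apply j).neg) hB
    have hD : MeasurableSet (U ⁻¹' {1}) := hU (measurableSet_singleton 1)
    have hsB : μ (Y ⁻¹' ((fun (y : ℕ → ℤ) j => - y j) ⁻¹' B)) = μ (Y ⁻¹' B) := by
      rw [← Measure.map_apply hY hB, ← hs, Measure.map_apply hYn hB]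
      rfl
    rw [← measure_inter_add_sdiff _ hD, ← measure_inter_add_sdiff (U ⁻¹' A) hD]
    have e1 : (U ⁻¹' A ∩ (fun ω j => U ω * Y ω j) ⁻¹' B) ∩ U ⁻¹' {1} =
        U ⁻¹' (A ∩ {1}) ∩ Y ⁻¹' B := by
      ext ω
      rcases hv ω with h | h <;> simp [h]
    have e2 : (U ⁻¹' A ∩ (fun ω j => U ω * Y ω j) ⁻¹' B) \ U ⁻¹' {1} =
        U ⁻¹' (A \ {1}) ∩ Y ⁻¹' ((fun (y : ℕ → ℤ) j => - y j) ⁻¹' B) := by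
      ext ω
      rcases hv ω with h | h <;> simp [h]
    rw [e1, e2, hi.measure_inter_preimage_eq_mul _ _ (MeasurableSet.of_discrete) hB,
      hi.measure_inter_preimage_eq_mul _ _ (MeasurableSet.of_discrete) hB', hsB, ← add_mul]
    rfl
  rw [indepFun_iff_measure_inter_preimage_eq_mul]
  intro A B _ hB
  have h1 := key Set.univ B hB
  simp only [Set.preimage_univ, Set.univ_inter, measure_univ, one_mul] at h1
  rw [key A B hB, h1]

lemma cvaux_part1 {Ω : Type*} [MeasurableSpace Ω] (μ : Measure Ω)
    [IsProbabilityMeasure μ] (X : ℕ → Ω → ℤ)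
    (hmeas : ∀ j, 1 ≤ j → Measurable (X j))
    (hval : ∀ j, 1 ≤ j → ∀ ω, X j ω = 1 ∨ X j ω = -1)
    (hindep : iIndepFun (fun j : ℕ => X (j + 1)) μ)
    (hlaw : ∀ j, 1 ≤ j →
      μ {ω | X j ω = 1} = 1 / 2 ∧ μ {ω | X j ω = -1} = 1 / 2) :
    IndepFun (X 1) (fun ω (j : ℕ) => X 1 ω * X (j + 2) ω) μ := by
  have hm2 : ∀ j, Measurable (X (j + 2)) := fun j => hmeas _ (by omega)
  refine cvaux_indep μ (X 1) (fun ω j => X (j + 2) ω) (hmeas 1 le_rfl)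
    (measurable_pi_iff.2 hm2) (hval 1 le_rfl) ?_ ?_
  · have h := indep_iSup_of_disjoint (m := fun j : ℕ => MeasurableSpace.comap (X (j + 1)) ⊤)
      (fun j => (hmeas (j + 1) (by omega)).comap_le) hindep
      (S := {0}) (T := {0}ᶜ) disjoint_compl_right
    rw [IndepFun_iff_Indep]
    refine indep_of_indep_of_le_left (indep_of_indep_of_le_right h ?_) ?_
    · rw [← measurable_iff_comap_le]
      refine @measurable_pi_lambda _ _ _ (_) _ _ fun j => ?_
      rw [measurable_iff_comap_le]
      exact le_iSup₂_of_le (j + 1) (by simp) le_rfl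
    · exact le_iSup₂_of_le 0 (by simp) le_rfl
  · have hi2 : iIndepFun (fun j : ℕ => X (j + 2)) μ :=
      hindep.precomp (g := fun j : ℕ => j + 1) (fun a b h => by simpa using h)
    have hi3 : iIndepFun (fun (j : ℕ) ω => - X (j + 2) ω) μ :=
      hi2.comp (fun _ x => - x) (fun _ => measurable_neg)
    have hm3 : ∀ j : ℕ, Measurable (fun ω => - X (j + 2) ω) := fun j => (hm2 j).neg
    rw [hi2.map_fun_eq_infinitePi_map hm2, hi3.map_fun_eq_infinitePi_map hm3]
    congr 1
    funext j
    exact cvaux_neg_map μ _ (hm2 j) (hval _ (by omega)) (hlaw _ (by omega))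

lemma cvaux_part2 {Ω : Type*} [MeasurableSpace Ω] (μ : Measure Ω) (X : ℕ → Ω → ℤ)
    (hval : ∀ j, 1 ≤ j → ∀ ω, X j ω = 1 ∨ X j ω = -1)
    (h1 : IndepFun (X 1) (fun ω (j : ℕ) => X 1 ω * X (j + 2) ω) μ) :
    IndepFun (X 1) (fun ω => cvSbarRV X ω) μ := by
  obtain ⟨Z, hZ, hZ1, hZ2⟩ : ∃ Z : ℕ → (ℕ → ℤ) → ℤ, (∀ j, Measurable (Z j)) ∧
      (∀ z, Z 1 z = 1) ∧ (∀ k z, Z (k + 2) z = z k) := by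
    refine ⟨fun j z => if j ≤ 1 then 1 else z (j - 2), fun j => ?_, fun z => by simp,
      fun k z => by simp⟩
    by_cases hj : j ≤ 1
    · simp only [hj, if_true]; exact measurable_const
    · simp only [hj, if_false]; exact measurable_pi_apply _
  have h2 : IndepFun (id ∘ X 1) ((fun z => cvSbarRV Z z) ∘
      (fun ω (j : ℕ) => X 1 ω * X (j + 2) ω)) μ :=
    h1.comp measurable_id (cvaux_meas_sbarRV Z hZ)
  have he : ∀ ω, cvSbarRV Z (fun j : ℕ => X 1 ω * X (j + 2) ω) = cvSbarRV X ω := by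
    intro ω
    have hc : X 1 ω * X 1 ω = 1 := by rcases hval 1 le_rfl ω with h | h <;> simp [h]
    refine cvaux_sbarRV (X 1 ω) hc X Z ω (fun j : ℕ => X 1 ω * X (j + 2) ω) ?_
    intro j hj
    by_cases hj1 : j = 1
    · subst hj1; rw [hZ1, hc]
    · obtain ⟨k, rfl⟩ : ∃ k, j = k + 2 := ⟨j - 2, by omega⟩
      rw [hZ2]
  have he' : ((fun z => cvSbarRV Z z) ∘ (fun ω (j : ℕ) => X 1 ω * X (j + 2) ω)) =
      fun ω => cvSbarRV X ω := funext he
  rw [he', Function.id_comp] at h2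
  exact h2

/-- If the signs `(X j)_{j ≥ 1}` are i.i.d. uniform on `{−1, 1}`, then `X 1` is
independent of the sequence of products `(X 1 · X (j+1))_{j ≥ 1}`.  Consequently,
`S 1 = X 1` is independent of the Csaki–Vincze transform `S̄ = T(S)`, since `S̄` is a
measurable function of `(X 1 · X (j+1))_{j ≥ 1}`. -/
theorem cv_first_step_indep_transform {Ω : Type*} [MeasurableSpace Ω] (μ : Measure Ω)
    [IsProbabilityMeasure μ] (X : ℕ → Ω → ℤ)
    (hmeas : ∀ j, 1 ≤ j → Measurable (X j))
    (hval : ∀ j, 1 ≤ j → ∀ ω, X j ω = 1 ∨ X j ω = -1)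
    (hindep : iIndepFun (fun j : ℕ => X (j + 1)) μ)
    (hlaw : ∀ j, 1 ≤ j →
      μ {ω | X j ω = 1} = 1 / 2 ∧ μ {ω | X j ω = -1} = 1 / 2) :
    IndepFun (X 1) (fun ω (j : ℕ) => X 1 ω * X (j + 2) ω) μ ∧
    IndepFun (X 1) (fun ω => cvSbarRV X ω) μ := by
  have h1 := cvaux_part1 μ X hmeas hval hindep hlaw
  exact ⟨h1, cvaux_part2 μ X hval h1⟩
end
end

section
/- For all integers p ≤ n, |Ψ_{p,n}(0)| = S⁺_{p,n}. -/
noncomputable section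

/-- The star graph `G` with `N` half-lines `D_1, …, D_N` glued at the origin, realized by
canonical representatives in `Fin N × ℝ`: a point is a pair (ray index, distance to the
origin), the origin being represented on the ray of index `N - 1` (i.e. the ray `e_N`,
matching the convention `e(0) = e_N`). -/
def StarG (N : ℕ) : Type :=
  {p : Fin N × ℝ // 0 ≤ p.2 ∧ (p.2 = 0 → (p.1 : ℕ) = N - 1)}

namespace StarG

variable {N : ℕ}

instance : DecidableEq (StarG N) :=
  inferInstanceAs (DecidableEq {p : Fin N × ℝ // 0 ≤ p.2 ∧ (p.2 = 0 → (p.1 : ℕ) = N - 1)})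

instance : MeasurableSpace (StarG N) :=
  inferInstanceAs (MeasurableSpace {p : Fin N × ℝ // 0 ≤ p.2 ∧ (p.2 = 0 → (p.1 : ℕ) = N - 1)})

/-- The ray index `e(x)` of a point, with the convention `e(0) = e_N`. -/
def ray (x : StarG N) : Fin N := x.1.1

/-- `|x| = d(x, 0)`, the distance from `x` to the origin. -/
def nrm (x : StarG N) : ℝ := x.1.2

/-- The distance on `G`: `d(h·e_i, h'·e_j) = |h − h'|` if `i = j` and `h + h'` if
`i ≠ j`. -/
def dist (x y : StarG N) : ℝ :=
  if x.ray = y.ray then |x.nrm - y.nrm| else x.nrm + y.nrm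

/-- The origin `0` of `G` (requires `N ≥ 1`). -/
def origin (hN : 1 ≤ N) : StarG N :=
  ⟨(⟨N - 1, by omega⟩, 0), le_refl 0, fun _ => rfl⟩

/-- The point `h·e_i` (sent to the origin when `h ≤ 0`; in particular `0·e_i = 0` for
every `i`).  For `x` on the ray `D_i` and `t ≥ −|x|`, the point `x + e(x)·t` is
`pt hN (ray x) (nrm x + t)`. -/
def pt (hN : 1 ≤ N) (i : Fin N) (h : ℝ) : StarG N :=
  if hh : 0 < h then ⟨(i, h), le_of_lt hh, fun h0 => absurd h0 (ne_of_gt hh)⟩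
  else origin hN

/-- `x ∈ D_i` : the point `x` lies on the `i`-th half-line (the origin lies on all). -/
def memRay (x : StarG N) (i : Fin N) : Prop := x.ray = i ∨ x.nrm = 0

/-- `x ∈ G_ℕ` : the distance from `x` to the origin is a natural number. -/
def isLattice (x : StarG N) : Prop := ∃ m : ℕ, x.nrm = (m : ℝ)

end StarG

/-- `min_{p ≤ h ≤ n} S h` (junk value `0` when `n < p`). -/
def walkMin (S : ℤ → ℤ) (p n : ℤ) : ℤ :=
  if h : p ≤ n then (Finset.Icc p n).inf' (Finset.nonempty_Icc.mpr h) S else 0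

/-- `S⁺_{p,n} = S_{p,n} − min_{p ≤ h ≤ n} S_{p,h} = S n − min_{p ≤ h ≤ n} S h`. -/
def walkPlus (S : ℤ → ℤ) (p n : ℤ) : ℤ := S n - walkMin S p n

/-- The one-step map `Ψ_{p,p+1}` on `G_ℕ`:
`Ψ_{p,p+1}(x) = x + e(x)·S_{p,p+1}` for `x ≠ 0` and `Ψ_{p,p+1}(0) = S⁺_{p,p+1}·η_p`. -/
def psiStep {N : ℕ} (hN : 1 ≤ N) (S : ℤ → ℤ) (η : ℤ → Fin N) (p : ℤ) (x : StarG N) :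
    StarG N :=
  if x.nrm = 0 then StarG.pt hN (η p) ((walkPlus S p (p + 1) : ℤ) : ℝ)
  else StarG.pt hN x.ray (x.nrm + ((S (p + 1) - S p : ℤ) : ℝ))

/-- `k`-fold composition: `psiAux hN S η p k = Ψ_{p+k-1,p+k} ∘ ⋯ ∘ Ψ_{p,p+1}`. -/
def psiAux {N : ℕ} (hN : 1 ≤ N) (S : ℤ → ℤ) (η : ℤ → Fin N) (p : ℤ) :
    ℕ → StarG N → StarG N
  | 0 => id
  | k + 1 => fun x => psiStep hN S η (p + k) (psiAux hN S η p k x)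

/-- The discrete flow of mappings `Ψ_{p,n} = Ψ_{n−1,n} ∘ ⋯ ∘ Ψ_{p,p+1}` (the identity
when `n ≤ p`). -/
def psiFlow {N : ℕ} (hN : 1 ≤ N) (S : ℤ → ℤ) (η : ℤ → Fin N) (p n : ℤ) (x : StarG N) :
    StarG N :=
  psiAux hN S η p (n - p).toNat x

theorem walkMin_self' (S : ℤ → ℤ) (p : ℤ) : walkMin S p p = S p := by
  simp [walkMin]

theorem walkMin_succ' (S : ℤ → ℤ) (p n : ℤ) (h : p ≤ n) :
    walkMin S p (n + 1) = min (walkMin S p n) (S (n + 1)) := by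
  have h1 : p ≤ n + 1 := by omega
  simp only [walkMin, h, h1, dif_pos]
  apply le_antisymm
  · apply le_min
    · apply Finset.le_inf'
      intro b hb
      rw [Finset.mem_Icc] at hb
      exact Finset.inf'_le S (Finset.mem_Icc.mpr ⟨hb.1, by omega⟩)
    · exact Finset.inf'_le S (Finset.mem_Icc.mpr ⟨h1, le_refl _⟩)
  · apply Finset.le_inf'
    intro b hb
    rw [Finset.mem_Icc] at hb
    by_cases hbn : b ≤ n
    · exact (min_le_left _ _).trans (Finset.inf'_le S (Finset.mem_Icc.mpr ⟨hb.1, hbn⟩))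
    · have : b = n + 1 := by omega
      subst this
      exact min_le_right _ _

theorem walkMin_le' (S : ℤ → ℤ) (p n : ℤ) (h : p ≤ n) : walkMin S p n ≤ S n := by
  simp only [walkMin, h, dif_pos]
  exact Finset.inf'_le S (Finset.mem_Icc.mpr ⟨h, le_refl _⟩)

theorem nrm_pt' {N : ℕ} (hN : 1 ≤ N) (i : Fin N) (m : ℤ) (h : 0 ≤ m) :
    (StarG.pt hN i (m : ℝ)).nrm = (m : ℝ) := by
  by_cases hh : 0 < (m : ℝ)
  · exact congrArg StarG.nrm (show StarG.pt hN i (m : ℝ) = _ from dif_pos hh)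
  · have h1 : (StarG.pt hN i (m : ℝ)).nrm = (StarG.origin hN).nrm :=
      congrArg StarG.nrm (show StarG.pt hN i (m : ℝ) = _ from dif_neg hh)
    have h2 : m = 0 := by
      have : ¬ (0 < m) := by exact_mod_cast hh
      omega
    rw [h1, h2, Int.cast_zero]
    rfl

theorem psiAux_nrm' {N : ℕ} (hN : 1 ≤ N) (S : ℤ → ℤ)
    (hS : ∀ n : ℤ, S n - S (n - 1) = 1 ∨ S n - S (n - 1) = -1)
    (η : ℤ → Fin N) (p : ℤ) (k : ℕ) :
    (psiAux hN S η p k (StarG.origin hN)).nrm = ((walkPlus S p (p + k) : ℤ) : ℝ) := by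
  induction k with
  | zero =>
    have h : walkPlus S p (p + ((0 : ℕ) : ℤ)) = 0 := by simp [walkPlus, walkMin_self']
    rw [h, Int.cast_zero]
    rfl
  | succ k ih =>
    have hle : p ≤ p + (k : ℤ) := by omega
    have hs := hS (p + k + 1)
    rw [add_sub_cancel_right] at hs
    have h1 := walkMin_succ' S p (p + k) hle
    have h2 := walkMin_le' S p (p + k) hle
    have h3 := walkMin_succ' S (p + k) (p + k) le_rfl
    rw [walkMin_self'] at h3
    have e : p + ((k + 1 : ℕ) : ℤ) = p + k + 1 := by push_cast; ring
    simp only [psiAux, psiStep]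
    rw [ih, e]
    split_ifs with h0
    · have h0' : walkPlus S p (p + k) = 0 := by exact_mod_cast h0
      unfold walkPlus at h0' ⊢
      rw [nrm_pt' hN _ _ (by omega)]
      congr 1
      omega
    · have h0' : walkPlus S p (p + k) ≠ 0 := by exact_mod_cast h0
      unfold walkPlus at h0' ⊢
      rw [← Int.cast_add, nrm_pt' hN _ _ (by omega)]
      congr 1
      omega

/-- For all integers `p ≤ n`, `|Ψ_{p,n}(0)| = S⁺_{p,n}`. -/
theorem psiFlow_nrm_origin (N : ℕ) (hN : 1 ≤ N) (S : ℤ → ℤ)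
    (hS : ∀ n : ℤ, S n - S (n - 1) = 1 ∨ S n - S (n - 1) = -1)
    (η : ℤ → Fin N) (p n : ℤ) (hpn : p ≤ n) :
    (psiFlow hN S η p n (StarG.origin hN)).nrm = ((walkPlus S p n : ℤ) : ℝ) := by
  unfold psiFlow
  rw [psiAux_nrm' hN S hS η p]
  have e : p + ((n - p).toNat : ℤ) = n := by omega
  rw [e]
end
end

section
/- For all integers p < n < q: if min_{p ≤ h ≤ q} S_h = min_{n ≤ h ≤ q} S_h, then e(Ψ_{p,q}(0)) = e(Ψ_{n,q}(0)). -/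
noncomputable section

theorem aux_nrm_pt {N : ℕ} (hN : 1 ≤ N) (i : Fin N) (h : ℝ) :
    (StarG.pt hN i h).nrm = max 0 h := by
  by_cases hh : 0 < h
  · have e : StarG.pt hN i h = (⟨(i, h), le_of_lt hh, fun h0 => absurd h0 (ne_of_gt hh)⟩ :
        {p : Fin N × ℝ // 0 ≤ p.2 ∧ (p.2 = 0 → (p.1 : ℕ) = N - 1)}) := dif_pos hh
    refine (congrArg StarG.nrm e).trans ?_
    exact (max_eq_right hh.le).symm
  · have e : StarG.pt hN i h = StarG.origin hN := dif_neg hh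
    rw [e]
    exact (max_eq_left (not_lt.mp hh)).symm

theorem aux_eq_origin {N : ℕ} (hN : 1 ≤ N) (x : StarG N) (hx : x.nrm ≤ 0) :
    x = StarG.origin hN := by
  have h0 : x.1.2 = 0 := le_antisymm hx x.2.1
  have h1 := x.2.2 h0
  apply Subtype.ext
  apply Prod.ext
  · exact Fin.ext h1
  · exact h0

theorem aux_walkMin_le (S : ℤ → ℤ) (p n j : ℤ) (h1 : p ≤ j) (h2 : j ≤ n) :
    walkMin S p n ≤ S j := by
  unfold walkMin
  rw [dif_pos (h1.trans h2)]
  exact Finset.inf'_le _ (Finset.mem_Icc.mpr ⟨h1, h2⟩)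

theorem aux_walkMin_exists (S : ℤ → ℤ) (p n : ℤ) (h : p ≤ n) :
    ∃ j, p ≤ j ∧ j ≤ n ∧ walkMin S p n = S j := by
  unfold walkMin
  rw [dif_pos h]
  obtain ⟨j, hj, e⟩ := Finset.exists_mem_eq_inf' (Finset.nonempty_Icc.mpr h) S
  rw [Finset.mem_Icc] at hj
  exact ⟨j, hj.1, hj.2, e⟩

theorem aux_step {N : ℕ} (hN : 1 ≤ N) (S : ℤ → ℤ) (η : ℤ → Fin N) (p m : ℤ) (x : StarG N)
    (hm : m ≤ S p) (hm' : m ≤ S (p + 1)) (hx : x.nrm ≤ ((S p - m : ℤ) : ℝ)) :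
    (psiStep hN S η p x).nrm ≤ ((S (p + 1) - m : ℤ) : ℝ) := by
  unfold psiStep
  split_ifs with h
  · rw [aux_nrm_pt]
    apply max_le
    · exact_mod_cast sub_nonneg.mpr hm'
    · obtain ⟨j, h1, h2, e⟩ := aux_walkMin_exists S p (p + 1) (by omega)
      have : walkPlus S p (p + 1) ≤ S (p + 1) - m := by
        unfold walkPlus
        rw [e]
        obtain rfl | rfl : j = p ∨ j = p + 1 := by omega
        · omega
        · omega
      exact_mod_cast this
  · rw [aux_nrm_pt]
    apply max_le
    · exact_mod_cast sub_nonneg.mpr hm'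
    · push_cast at hx ⊢
      linarith

theorem aux_bound {N : ℕ} (hN : 1 ≤ N) (S : ℤ → ℤ) (η : ℤ → Fin N) (p m : ℤ) (k : ℕ)
    (hm : ∀ j, p ≤ j → j ≤ p + k → m ≤ S j) :
    (psiAux hN S η p k (StarG.origin hN)).nrm ≤ ((S (p + k) - m : ℤ) : ℝ) := by
  induction k with
  | zero =>
    have h := hm p le_rfl (by simp)
    have h' : (0 : ℤ) ≤ S (p + (0 : ℕ)) - m := by simpa using h
    have : (psiAux hN S η p 0 (StarG.origin hN)).nrm = 0 := rfl
    rw [this]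
    exact_mod_cast h'
  | succ k ih =>
    have ih' := ih (fun j h1 h2 => hm j h1 (by push_cast; omega))
    have e : p + ((k + 1 : ℕ) : ℤ) = p + k + 1 := by push_cast; ring
    rw [e]
    exact aux_step hN S η (p + k) m _ (hm _ (by omega) (by push_cast; omega))
      (hm _ (by omega) (by push_cast; omega)) ih'

theorem aux_comp {N : ℕ} (hN : 1 ≤ N) (S : ℤ → ℤ) (η : ℤ → Fin N) (p : ℤ) (a b : ℕ)
    (x : StarG N) :
    psiAux hN S η p (a + b) x = psiAux hN S η (p + a) b (psiAux hN S η p a x) := by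
  induction b with
  | zero => rfl
  | succ b ih =>
    change psiStep hN S η (p + ((a + b : ℕ) : ℤ)) (psiAux hN S η p (a + b) x) =
      psiStep hN S η (p + a + b) (psiAux hN S η (p + a) b (psiAux hN S η p a x))
    rw [ih]
    push_cast
    rw [add_assoc]

theorem aux_flow {N : ℕ} (hN : 1 ≤ N) (S : ℤ → ℤ) (η : ℤ → Fin N) (p h q : ℤ)
    (hph : p ≤ h) (hhq : h ≤ q) (hm : ∀ j, p ≤ j → j ≤ h → S h ≤ S j) :
    psiFlow hN S η p q (StarG.origin hN) = psiFlow hN S η h q (StarG.origin hN) := by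
  obtain ⟨a, rfl⟩ := Int.le.dest hph
  obtain ⟨b, rfl⟩ := Int.le.dest hhq
  have e1 : (p + a + b - p).toNat = a + b := by omega
  have e2 : (p + a + b - (p + a)).toNat = b := by omega
  unfold psiFlow
  rw [e1, e2, aux_comp]
  congr 1
  apply aux_eq_origin
  simpa using aux_bound hN S η p (S (p + a)) a hm

/-- For all integers `p < n < q`: if `min_{p ≤ h ≤ q} S h = min_{n ≤ h ≤ q} S h`, then
`e(Ψ_{p,q}(0)) = e(Ψ_{n,q}(0))`. -/
theorem psiFlow_ray_eq_of_min_eq (N : ℕ) (hN : 1 ≤ N) (S : ℤ → ℤ)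
    (hS : ∀ n : ℤ, S n - S (n - 1) = 1 ∨ S n - S (n - 1) = -1)
    (η : ℤ → Fin N) (p n q : ℤ) (hpn : p < n) (hnq : n < q)
    (hmin : walkMin S p q = walkMin S n q) :
    (psiFlow hN S η p q (StarG.origin hN)).ray = (psiFlow hN S η n q (StarG.origin hN)).ray := by
  obtain ⟨h, h1, h2, e⟩ := aux_walkMin_exists S n q hnq.le
  have key : ∀ j, p ≤ j → j ≤ h → S h ≤ S j := by
    intro j hj1 hj2
    have := aux_walkMin_le S p q j hj1 (hj2.trans h2)
    omega
  rw [aux_flow hN S η p h q (by omega) h2 key,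
    aux_flow hN S η n h q h1 h2 (fun j hj => key j (by omega))]
end
end

section
/- Let T_{p,x} = inf{q ≥ p : S_q − S_p = −|x|} (with T_{p,x} = +∞ if no such q exists). For all integers p ≤ n and all x ∈ G_ℕ: if n ≤ T_{p,x} (i.e. S_{p,j} > −|x| for all p ≤ j < n) then Ψ_{p,n}(x) = x + e(x)·S_{p,n}, and if n > T_{p,x} (i.e. S_{p,j} = −|x| for some p ≤ j < n) then Ψ_{p,n}(x) = Ψ_{p,n}(0). -/
noncomputable section

theorem starG_ext {N : ℕ} {x y : StarG N} (h1 : x.ray = y.ray) (h2 : x.nrm = y.nrm) : x = y :=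
  Subtype.ext (Prod.ext h1 h2)

theorem starG_eq_origin {N : ℕ} (hN : 1 ≤ N) {x : StarG N} (h : x.nrm = 0) :
    x = StarG.origin hN :=
  starG_ext (Fin.ext (x.2.2 h)) h

theorem pt_of_pos {N : ℕ} (hN : 1 ≤ N) (i : Fin N) {h : ℝ} (hh : 0 < h) :
    StarG.pt hN i h = ⟨(i, h), le_of_lt hh, fun h0 => absurd h0 (ne_of_gt hh)⟩ :=
  dif_pos hh

theorem pt_of_nonpos {N : ℕ} (hN : 1 ≤ N) (i : Fin N) {h : ℝ} (hh : ¬ 0 < h) :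
    StarG.pt hN i h = StarG.origin hN :=
  dif_neg hh

theorem pt_pos_nrm {N : ℕ} (hN : 1 ≤ N) (i : Fin N) {h : ℝ} (hh : 0 ≤ h) :
    (StarG.pt hN i h).nrm = h := by
  by_cases h1 : 0 < h
  · exact congrArg StarG.nrm (pt_of_pos hN i h1)
  · refine (congrArg StarG.nrm (pt_of_nonpos hN i h1)).trans ?_
    change (0 : ℝ) = h
    exact le_antisymm hh (not_lt.mp h1)

theorem pt_pos_ray {N : ℕ} (hN : 1 ≤ N) (i : Fin N) {h : ℝ} (hh : 0 < h) :
    (StarG.pt hN i h).ray = i :=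
  congrArg StarG.ray (pt_of_pos hN i hh)

theorem pt_self {N : ℕ} (hN : 1 ≤ N) (x : StarG N) : StarG.pt hN x.ray x.nrm = x := by
  rcases lt_or_eq_of_le (show 0 ≤ x.nrm from x.2.1) with h | h
  · exact starG_ext (pt_pos_ray hN _ h) (pt_pos_nrm hN _ h.le)
  · exact (pt_of_nonpos hN _ (by rw [← h]; exact lt_irrefl _)).trans
      (starG_eq_origin hN h.symm).symm

theorem walkPlus_one (S : ℤ → ℤ) (p : ℤ) :
    walkPlus S p (p + 1) = max 0 (S (p + 1) - S p) := by
  have h : walkMin S p (p + 1) = min (S p) (S (p + 1)) := by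
    unfold walkMin
    rw [dif_pos (by omega)]
    apply le_antisymm
    · exact le_min (Finset.inf'_le _ (by simp)) (Finset.inf'_le _ (by simp))
    · apply Finset.le_inf'
      intro b hb
      rw [Finset.mem_Icc] at hb
      have : b = p ∨ b = p + 1 := by omega
      rcases this with rfl | rfl
      · exact min_le_left _ _
      · exact min_le_right _ _
  unfold walkPlus
  rw [h]
  omega

theorem psi_key {N : ℕ} (hN : 1 ≤ N) (S : ℤ → ℤ)
    (hS : ∀ n : ℤ, S n - S (n - 1) = 1 ∨ S n - S (n - 1) = -1)
    (η : ℤ → Fin N) (p : ℤ) (x : StarG N) (m : ℕ) (hm : x.nrm = m) (k : ℕ) :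
    ((∀ i : ℕ, i < k → 0 < m + S (p + i) - S p) ∧ 0 ≤ m + S (p + k) - S p ∧
      psiAux hN S η p k x = StarG.pt hN x.ray ((m + S (p + k) - S p : ℤ) : ℝ) ∧
      ∃ y : ℤ, 0 ≤ y ∧ y ≤ m + S (p + k) - S p ∧
        (psiAux hN S η p k (StarG.origin hN)).nrm = (y : ℝ)) ∨
    ((∃ i : ℕ, i < k ∧ m + S (p + i) - S p = 0) ∧
      psiAux hN S η p k x = psiAux hN S η p k (StarG.origin hN)) := by
  induction k with
  | zero =>
    left
    refine ⟨by simp, by simp, ?_, 0, le_refl _, by simp, ?_⟩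
    · have := pt_self hN x
      rw [hm] at this
      simpa [psiAux] using this.symm
    · rw [Int.cast_zero]
      rfl
  | succ k ih =>
    rcases ih with ⟨h1, h2, h3, y, hy0, hy, hyn⟩ | ⟨⟨i, hi, h⟩, he⟩
    · rcases h2.eq_or_lt with h0 | h0
      · right
        refine ⟨⟨k, by omega, h0.symm⟩, ?_⟩
        have hy' : y = 0 := by omega
        have e1 : psiAux hN S η p k x = StarG.origin hN := by
          rw [h3, ← h0]; exact pt_of_nonpos hN _ (by simp)
        have e2 : psiAux hN S η p k (StarG.origin hN) = StarG.origin hN :=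
          starG_eq_origin hN (by rw [hyn, hy']; simp)
        simp only [psiAux, e1, e2]
      · left
        have hs := hS (p + k + 1)
        have e : p + (k : ℤ) + 1 - 1 = p + k := by ring
        rw [e] at hs
        have ek : p + ((k + 1 : ℕ) : ℤ) = p + k + 1 := by push_cast; ring
        rw [ek]
        have h0' : (0 : ℝ) < ((m + S (p + k) - S p : ℤ) : ℝ) := by exact_mod_cast h0
        refine ⟨?_, by omega, ?_, ?_⟩
        · intro i hi
          rcases Nat.lt_succ_iff_lt_or_eq.mp hi with hi | rfl
          · exact h1 i hi
          · exact h0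
        · simp only [psiAux, h3]
          unfold psiStep
          rw [pt_pos_nrm hN _ h0'.le, pt_pos_ray hN _ h0', if_neg h0'.ne']
          congr 1
          push_cast
          ring
        · simp only [psiAux]
          unfold psiStep
          rw [hyn, walkPlus_one]
          by_cases hy1 : y = 0
          · refine ⟨max 0 (S (p + k + 1) - S (p + k)), by omega, by omega, ?_⟩
            rw [if_pos (by rw [hy1]; simp), pt_pos_nrm]
            exact_mod_cast le_max_left _ _
          · refine ⟨y + (S (p + k + 1) - S (p + k)), by omega, by omega, ?_⟩
            rw [if_neg (by exact_mod_cast hy1), ← Int.cast_add, pt_pos_nrm]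
            have : 0 ≤ y + (S (p + k + 1) - S (p + k)) := by omega
            exact_mod_cast this
    · right
      refine ⟨⟨i, by omega, h⟩, ?_⟩
      simp only [psiAux, he]

/-- Let `T_{p,x} = inf {q ≥ p : S q − S p = −|x|}`.  For all integers `p ≤ n` and all
`x ∈ G_ℕ`: if `n ≤ T_{p,x}` (i.e. `S_{p,j} > −|x|` for all `p ≤ j < n`) then
`Ψ_{p,n}(x) = x + e(x)·S_{p,n}`, and if `n > T_{p,x}` (i.e. `S_{p,j} = −|x|` for some
`p ≤ j < n`) then `Ψ_{p,n}(x) = Ψ_{p,n}(0)`. -/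
theorem psiFlow_before_after_hitting (N : ℕ) (hN : 1 ≤ N) (S : ℤ → ℤ)
    (hS : ∀ n : ℤ, S n - S (n - 1) = 1 ∨ S n - S (n - 1) = -1)
    (η : ℤ → Fin N) (p n : ℤ) (hpn : p ≤ n) (x : StarG N) (hx : x.isLattice) :
    ((∀ j : ℤ, p ≤ j → j < n → -x.nrm < ((S j - S p : ℤ) : ℝ)) →
      psiFlow hN S η p n x = StarG.pt hN x.ray (x.nrm + ((S n - S p : ℤ) : ℝ))) ∧
    ((∃ j : ℤ, p ≤ j ∧ j < n ∧ ((S j - S p : ℤ) : ℝ) = -x.nrm) →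
      psiFlow hN S η p n x = psiFlow hN S η p n (StarG.origin hN)) := by
  obtain ⟨m, hm⟩ := hx
  obtain ⟨k, rfl⟩ : ∃ k : ℕ, n = p + k := ⟨(n - p).toNat, by omega⟩
  have hk : (p + (k : ℤ) - p).toNat = k := by omega
  have key := psi_key hN S hS η p x m hm k
  unfold psiFlow
  rw [hk, hm]
  constructor
  · intro hj
    rcases key with ⟨-, -, h3, -⟩ | ⟨⟨i, hi, h⟩, -⟩
    · rw [h3]
      congr 1
      push_cast
      ring
    · exfalso
      have := hj (p + i) (by omega) (by omega)
      have h' : -(m : ℤ) < S (p + i) - S p := by exact_mod_cast this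
      omega
  · rintro ⟨j, hj1, hj2, hj3⟩
    rcases key with ⟨h1, -⟩ | ⟨-, he⟩
    · exfalso
      have h' : S j - S p = -(m : ℤ) := by exact_mod_cast hj3
      have := h1 (j - p).toNat (by omega)
      have e : p + ((j - p).toNat : ℤ) = j := by omega
      rw [e] at this
      omega
    · exact he
end
end
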